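/- Let d ≥ 2 and n be positive integers, let (x_i)_{i=1}^n be independent random vectors each drawn from the uniform probability measure on the sphere of radius sqrt(d/n) in ℝ^d, and let S = Σ_{i=1}^n x_i x_i^* be the associated frame operator. Then for every ε ≥ 0, the probability that ‖S − I_d‖_F ≥ ε is at most 2d² · exp( − (d−1) n ε² / (8 d⁴) ). -/

import Mathlib

open MeasureTheory ProbabilityTheory Real

noncomputable section

/-- The Frobenius (Hilbert–Schmidt) norm of `S - I_d`, where
`S = ∑ i, x_i x_i^*` is the frame operator of the family `x`; entrywise,
`S j k = ∑ i, x i j * x i k`. -/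
def frobNormFrameOpSubId {d n : ℕ} (x : Fin n → EuclideanSpace ℝ (Fin d)) : ℝ :=
  Real.sqrt (∑ j : Fin d, ∑ k : Fin d,
    ((∑ i : Fin n, x i j * x i k) - (if j = k then (1 : ℝ) else 0)) ^ 2)

open Module InnerProductSpace
open scoped RealInnerProductSpace NNReal

/-!
Write `a = ⟪u, x⟫` for a unit vector `u`, with `x` uniform on the sphere of radius `r` in dimension
`d`. Rotating `u` in a plane does not change the law of the coordinates of `x`, and differentiating
along such rotations gives the Stein identity `(d - 1) E[g(a) a] = E[g'(a) (r² - a²)]`. Applied to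
`g(a) = a exp (t (a² - r²/d))`, and combined with `a² (r² - a²) ≤ r⁴/4`, it becomes a differential
inequality `t M'(t) ≤ c t² M(t)` for the moment generating function `M` of `a² - r²/d`, with
`c = r⁴/(2d)`. So the centred squares are sub-Gaussian, by polarization so are the centred products
`⟪u, x⟫ ⟪v, x⟫`, and a Chernoff bound on each of the `d²` entries of `S - I` concludes. The
union bound yields the exponent `n ε² / d³`, which is at least `(d - 1) n ε² / (8 d⁴)`.
-/

section SubgaussianTails

variable {Ω κ : Type*} {mΩ : MeasurableSpace Ω} {μ : Measure Ω} {X : Ω → ℝ} {c : ℝ≥0}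

theorem apply_le_apply_zero_of_mul_deriv_nonpos {f : ℝ → ℝ} (hf : Differentiable ℝ f)
    (hf' : ∀ t, t * deriv f t ≤ 0) (s : ℝ) : f s ≤ f 0 := by
  rcases le_total 0 s with hs | hs
  · refine antitoneOn_of_deriv_nonpos (convex_Ici 0) hf.continuous.continuousOn
      hf.differentiableOn (fun t ht ↦ ?_) Set.self_mem_Ici hs hs
    rw [interior_Ici, Set.mem_Ioi] at ht
    exact nonpos_of_mul_nonpos_right (hf' t) ht
  · refine monotoneOn_of_deriv_nonneg (convex_Iic 0) hf.continuous.continuousOn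
      hf.differentiableOn (fun t ht ↦ ?_) hs Set.self_mem_Iic hs
    rw [interior_Iic, Set.mem_Iio] at ht
    exact nonneg_of_mul_nonpos_right (hf' t) ht

theorem hasSubgaussianMGF_of_mul_integral_mul_exp_le [IsProbabilityMeasure μ]
    (hint : ∀ t, Integrable (fun ω ↦ exp (t * X ω)) μ)
    (hle : ∀ t, t * ∫ ω, X ω * exp (t * X ω) ∂μ ≤ c * t ^ 2 * mgf X μ t) :
    HasSubgaussianMGF X c μ := by
  refine ⟨hint, fun t ↦ ?_⟩
  have huniv : integrableExpSet X μ = Set.univ := Set.eq_univ_of_forall hint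
  have hderiv (s : ℝ) : HasDerivAt (fun s ↦ mgf X μ s * exp (-(c * s ^ 2 / 2)))
      ((∫ ω, X ω * exp (s * X ω) ∂μ - c * s * mgf X μ s) * exp (-(c * s ^ 2 / 2))) s := by
    have hmgf : HasDerivAt (mgf X μ) (∫ ω, X ω * exp (s * X ω) ∂μ) s :=
      hasDerivAt_mgf (by simp [huniv])
    have hgauss : HasDerivAt (fun s : ℝ ↦ -(c * s ^ 2 / 2)) (-(c * s)) s :=
      ((((hasDerivAt_id s).pow 2).const_mul (c : ℝ)).div_const 2).neg.congr_deriv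
        (by rw [id_eq]; ring)
    exact (hmgf.mul hgauss.exp).congr_deriv (by ring)
  have hmono := apply_le_apply_zero_of_mul_deriv_nonpos (fun s ↦ (hderiv s).differentiableAt)
    (fun s ↦ by
      rw [(hderiv s).deriv, ← mul_assoc]
      exact mul_nonpos_of_nonpos_of_nonneg (by linarith [hle s]) (exp_pos _).le) t
  simpa [exp_neg, ← div_eq_mul_inv, div_le_one (exp_pos _)] using hmono

theorem hasSubgaussianMGF_const_mul (hX : HasSubgaussianMGF X c μ) (a : ℝ) :
    HasSubgaussianMGF (fun ω ↦ a * X ω) (‖a‖₊ ^ 2 * c) μ := by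
  have hparam : ‖a‖₊ ^ 2 = NNReal.mk (a ^ 2) (sq_nonneg a) := NNReal.eq (by simp)
  rw [hparam]
  exact hX.const_mul a

theorem hasSubgaussianMGF_sum_pi {ι : Type*} [Fintype ι] [IsProbabilityMeasure μ]
    (hX : HasSubgaussianMGF X c μ) :
    HasSubgaussianMGF (fun ω : ι → Ω ↦ ∑ i, X (ω i)) (Fintype.card ι * c)
      (Measure.pi fun _ ↦ μ) := by
  have hindep : iIndepFun (fun (i : ι) (ω : ι → Ω) ↦ X (ω i)) (Measure.pi fun _ ↦ μ) :=
    iIndepFun_pi fun _ ↦ hX.aemeasurable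
  have hcoord (i : ι) : HasSubgaussianMGF (fun ω : ι → Ω ↦ X (ω i)) c
      (Measure.pi fun _ ↦ μ) := by
    have heval := measurePreserving_eval (fun _ : ι ↦ μ) i
    exact .of_map heval.measurable.aemeasurable (by rwa [heval.map_eq])
  simpa using HasSubgaussianMGF.sum_of_iIndepFun hindep (c := fun _ ↦ c)
    (s := Finset.univ) fun i _ ↦ hcoord i

theorem measureReal_abs_ge_le_of_hasSubgaussianMGF
    (hX : HasSubgaussianMGF X c μ) {ε : ℝ} (hε : 0 ≤ ε) :
    μ.real {ω | ε ≤ |X ω|} ≤ 2 * exp (-ε ^ 2 / (2 * c)) := by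
  have hunion : {ω | ε ≤ |X ω|} = {ω | ε ≤ X ω} ∪ {ω | ε ≤ (-X) ω} := by
    ext ω
    exact le_abs (b := X ω)
  calc μ.real {ω | ε ≤ |X ω|}
      ≤ μ.real {ω | ε ≤ X ω} + μ.real {ω | ε ≤ (-X) ω} := hunion ▸ measureReal_union_le _ _
    _ ≤ 2 * exp (-ε ^ 2 / (2 * c)) := by
        rw [two_mul]
        exact add_le_add (hX.measure_ge_le hε) (hX.neg.measure_ge_le hε)

theorem measureReal_sqrt_sum_sq_ge_le [IsFiniteMeasure μ] [Fintype κ] [Nonempty κ]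
    {Y : κ → Ω → ℝ} (hY : ∀ k, HasSubgaussianMGF (Y k) c μ) {ε : ℝ} (hε : 0 ≤ ε) :
    μ.real {ω | ε ≤ √(∑ k, Y k ω ^ 2)}
      ≤ 2 * Fintype.card κ * exp (-ε ^ 2 / (2 * c * Fintype.card κ)) := by
  have hcard : (0 : ℝ) < Fintype.card κ := by exact_mod_cast Fintype.card_pos
  set δ : ℝ := √(ε ^ 2 / Fintype.card κ)
  have hδ : δ ^ 2 = ε ^ 2 / Fintype.card κ := sq_sqrt (by positivity)
  have hsubset : {ω | ε ≤ √(∑ k, Y k ω ^ 2)} ⊆ ⋃ k, {ω | δ ≤ |Y k ω|} := by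
    intro ω hω
    have hsq : ∑ _k : κ, ε ^ 2 / Fintype.card κ ≤ ∑ k, Y k ω ^ 2 := by
      simpa [mul_div_cancel₀ _ hcard.ne'] using (le_sqrt hε (by positivity)).1 hω
    obtain ⟨k, -, hk⟩ := Finset.exists_le_of_sum_le Finset.univ_nonempty hsq
    exact Set.mem_iUnion.2 ⟨k, (sqrt_le_sqrt hk).trans_eq (sqrt_sq_eq_abs _)⟩
  calc μ.real {ω | ε ≤ √(∑ k, Y k ω ^ 2)}
      ≤ μ.real (⋃ k, {ω | δ ≤ |Y k ω|}) := measureReal_mono hsubset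
    _ ≤ ∑ k, μ.real {ω | δ ≤ |Y k ω|} := measureReal_iUnion_fintype_le _
    _ ≤ ∑ _k : κ, 2 * exp (-δ ^ 2 / (2 * c)) := Finset.sum_le_sum fun k _ ↦
        measureReal_abs_ge_le_of_hasSubgaussianMGF (hY k) (sqrt_nonneg _)
    _ = 2 * Fintype.card κ * exp (-ε ^ 2 / (2 * c * Fintype.card κ)) := by
        rw [Finset.sum_const, Finset.card_univ, nsmul_eq_mul, hδ, ← neg_div, div_div,
          mul_comm (Fintype.card κ : ℝ) (2 * c)]
        ring

end SubgaussianTails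

section Orthonormal

variable {𝕜 E ι : Type*} [RCLike 𝕜] [NormedAddCommGroup E] [InnerProductSpace 𝕜 E]
  [FiniteDimensional 𝕜 E]

theorem exists_linearIsometryEquiv_apply_eq_of_orthonormal {u v : ι → E}
    (hu : Orthonormal 𝕜 u) (hv : Orthonormal 𝕜 v) :
    ∃ Q : E ≃ₗᵢ[𝕜] E, ∀ i, Q (u i) = v i := by
  let B : Basis ι 𝕜 (Submodule.span 𝕜 (Set.range u)) := Basis.span hu.linearIndependent
  have hB (i : ι) : (B i : E) = u i := by simp [B, Basis.span_apply]
  have hBu : Orthonormal 𝕜 B := by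
    rw [← (Submodule.subtypeₗᵢ _).orthonormal_comp_iff]
    have hcomp : (Submodule.subtypeₗᵢ _) ∘ B = u := funext hB
    rwa [hcomp]
  have hBv : Orthonormal 𝕜 (B.constr 𝕜 v ∘ B) := by
    simpa [Function.comp_def, Basis.constr_basis] using hv
  let L := (B.constr 𝕜 v).isometryOfOrthonormal hBu hBv
  refine ⟨L.extend.toLinearIsometryEquiv rfl, fun i ↦ ?_⟩
  rw [LinearIsometry.toLinearIsometryEquiv_apply, ← hB i, LinearIsometry.extend_apply]
  exact B.constr_basis 𝕜 v i

theorem exists_orthonormalBasis_apply_eq_of_norm_eq_one {u : E} (hu : ‖u‖ = 1) :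
    ∃ (s : Finset E) (b : OrthonormalBasis s 𝕜 E) (i : s), b i = u := by
  have hsingle : Orthonormal 𝕜 ((↑) : ({u} : Set E) → E) := by
    simp [Orthonormal, hu, Pairwise]
  obtain ⟨s, b, hs, hb⟩ := hsingle.exists_orthonormalBasis_extension
  exact ⟨s, b, ⟨u, hs rfl⟩, by simp [hb]⟩

end Orthonormal

theorem hasDerivAt_cos_smul_add_sin_smul {E : Type*} [NormedAddCommGroup E] [NormedSpace ℝ E]
    (u v : E) (t : ℝ) :
    HasDerivAt (fun t ↦ cos t • u + sin t • v) (cos t • v - sin t • u) t :=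
  (((hasDerivAt_cos t).smul_const u).add ((hasDerivAt_sin t).smul_const v)).congr_deriv
    (by module)

theorem hasDerivAt_cos_smul_sub_sin_smul {E : Type*} [NormedAddCommGroup E] [NormedSpace ℝ E]
    (u v : E) (t : ℝ) :
    HasDerivAt (fun t ↦ cos t • v - sin t • u) (-(cos t • u + sin t • v)) t :=
  (((hasDerivAt_cos t).smul_const v).sub ((hasDerivAt_sin t).smul_const u)).congr_deriv
    (by module)

theorem orthonormal_rotation {E : Type*} [NormedAddCommGroup E] [InnerProductSpace ℝ E]
    {u v : E} (huv : Orthonormal ℝ ![u, v]) (t : ℝ) :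
    Orthonormal ℝ ![cos t • u + sin t • v, cos t • v - sin t • u] := by
  obtain ⟨hu, huv, hv⟩ : ‖u‖ = 1 ∧ ⟪u, v⟫ = 0 ∧ ‖v‖ = 1 := by simpa using huv
  have hu' : ⟪u, u⟫ = 1 := inner_self_eq_one_of_norm_eq_one hu
  have hv' : ⟪v, v⟫ = 1 := inner_self_eq_one_of_norm_eq_one hv
  have hvu : ⟪v, u⟫ = 0 := by rw [real_inner_comm, huv]
  rw [orthonormal_iff_ite]
  simp only [Fin.forall_fin_two, Matrix.cons_val_zero, Matrix.cons_val_one, inner_add_left,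
    inner_add_right, inner_sub_left, inner_sub_right, real_inner_smul_left,
    real_inner_smul_right, hu', hv', huv, hvu, zero_ne_one, one_ne_zero, ↓reduceIte]
  refine ⟨⟨?_, ?_⟩, ?_, ?_⟩ <;> linarith [sin_sq_add_cos_sq t]

section UniformOnSphere

variable {E : Type*} [NormedAddCommGroup E] [InnerProductSpace ℝ E] [MeasurableSpace E]

/-- `μ` is concentrated on the sphere of radius `r` about the origin and invariant under all linear
isometries. The uniform probability measure on that sphere is the only probability measure with
these two properties, which is how it is encoded here; the total mass is left free. -/
structure IsUniformOnSphere (μ : Measure E) (r : ℝ) : Prop where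
  map_eq (Q : E ≃ₗᵢ[ℝ] E) : μ.map Q = μ
  norm_eq : ∀ᵐ x ∂μ, ‖x‖ = r

theorem isUniformOnSphere_of_measure_sphere_eq_one [OpensMeasurableSpace E] {μ : Measure E}
    [IsProbabilityMeasure μ] {r : ℝ} (hsupp : μ (Metric.sphere 0 r) = 1)
    (hinv : ∀ Q : E ≃ₗᵢ[ℝ] E, μ.map Q = μ) : IsUniformOnSphere μ r where
  map_eq := hinv
  norm_eq := by
    filter_upwards [(mem_ae_iff_prob_eq_one Metric.isClosed_sphere.measurableSet).2 hsupp] with x hx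
    exact mem_sphere_zero_iff_norm.1 hx

variable [FiniteDimensional ℝ E] [BorelSpace E] {μ : Measure E} {r : ℝ}

theorem integrable_of_continuous_of_ae_norm_eq [IsFiniteMeasure μ] (hr : ∀ᵐ x ∂μ, ‖x‖ = r)
    {f : E → ℝ} (hf : Continuous f) : Integrable f μ := by
  have hball : ∀ᵐ x ∂μ, x ∈ Metric.closedBall (0 : E) r := by
    filter_upwards [hr] with x hx using mem_closedBall_zero_iff.2 hx.le
  rw [← Measure.restrict_eq_self_of_ae_mem hball]
  exact hf.continuousOn.integrableOn_compact (isCompact_closedBall 0 r)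

theorem hasDerivAt_integral_of_ae_norm_eq [IsFiniteMeasure μ] (hr : ∀ᵐ x ∂μ, ‖x‖ = r)
    {F F' : ℝ → E → ℝ} (hF : ∀ t, Continuous (F t)) (hF' : Continuous fun p : ℝ × E ↦ F' p.1 p.2)
    (hderiv : ∀ x t, HasDerivAt (fun t ↦ F t x) (F' t x) t) (s : ℝ) :
    HasDerivAt (fun t ↦ ∫ x, F t x ∂μ) (∫ x, F' s x ∂μ) s := by
  obtain ⟨C, hC⟩ := ((isCompact_closedBall s 1).prod
    (isCompact_closedBall (0 : E) r)).exists_bound_of_continuousOn hF'.continuousOn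
  have hbound : ∀ᵐ x ∂μ, ∀ t ∈ Metric.closedBall s 1, ‖F' t x‖ ≤ C := by
    filter_upwards [hr] with x hx t ht using hC (t, x) ⟨ht, mem_closedBall_zero_iff.2 hx.le⟩
  have hF's : Continuous (F' s) := hF'.comp (Continuous.prodMk_right s)
  exact (hasDerivAt_integral_of_dominated_loc_of_deriv_le (Metric.closedBall_mem_nhds s one_pos)
    (.of_forall fun t ↦ (hF t).aestronglyMeasurable)
    (integrable_of_continuous_of_ae_norm_eq hr (hF s)) hF's.aestronglyMeasurable hbound
    (integrable_const C) (ae_of_all _ fun x t _ ↦ hderiv x t)).2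

namespace IsUniformOnSphere

theorem integral_comp_inner_eq (hμ : IsUniformOnSphere μ r) {ι : Type*} {u v : ι → E}
    (hu : Orthonormal ℝ u) (hv : Orthonormal ℝ v) (f : (ι → ℝ) → ℝ) :
    ∫ x, f (fun i ↦ ⟪u i, x⟫) ∂μ = ∫ x, f (fun i ↦ ⟪v i, x⟫) ∂μ := by
  obtain ⟨Q, hQ⟩ := exists_linearIsometryEquiv_apply_eq_of_orthonormal hu hv
  calc ∫ x, f (fun i ↦ ⟪u i, x⟫) ∂μ = ∫ x, f (fun i ↦ ⟪v i, Q x⟫) ∂μ := by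
        simp only [← hQ, Q.inner_map_map]
    _ = ∫ x, f (fun i ↦ ⟪v i, x⟫) ∂μ.map Q :=
        (Q.toHomeomorph.measurableEmbedding.integral_map fun x ↦ f (fun i ↦ ⟪v i, x⟫)).symm
    _ = ∫ x, f (fun i ↦ ⟪v i, x⟫) ∂μ := by rw [hμ.map_eq]

theorem integral_deriv_mul_inner_sq [IsFiniteMeasure μ] (hμ : IsUniformOnSphere μ r) {u v : E}
    (huv : Orthonormal ℝ ![u, v]) {g g' : ℝ → ℝ} (hg : ∀ a, HasDerivAt g (g' a) a)
    (hg' : Continuous g') :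
    ∫ x, g' ⟪u, x⟫ * ⟪v, x⟫ ^ 2 ∂μ = ∫ x, g ⟪u, x⟫ * ⟪u, x⟫ ∂μ := by
  have hgc : Continuous g := continuous_iff_continuousAt.2 fun a ↦ (hg a).continuousAt
  let p (t : ℝ) : E := cos t • u + sin t • v
  let q (t : ℝ) : E := cos t • v - sin t • u
  have hp (x : E) (t : ℝ) : HasDerivAt (fun t ↦ ⟪p t, x⟫) ⟪q t, x⟫ t := by
    simpa using (hasDerivAt_cos_smul_add_sin_smul u v t).inner ℝ (hasDerivAt_const t x)
  have hq (x : E) (t : ℝ) : HasDerivAt (fun t ↦ ⟪q t, x⟫) (-⟪p t, x⟫) t := by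
    simpa only [inner_zero_right, zero_add, inner_neg_left] using
      (hasDerivAt_cos_smul_sub_sin_smul u v t).inner ℝ (hasDerivAt_const t x)
  have hderiv : HasDerivAt (fun t ↦ ∫ x, g ⟪p t, x⟫ * ⟪q t, x⟫ ∂μ)
      (∫ x, (g' ⟪p 0, x⟫ * ⟪q 0, x⟫ ^ 2 - g ⟪p 0, x⟫ * ⟪p 0, x⟫) ∂μ) 0 :=
    hasDerivAt_integral_of_ae_norm_eq hμ.norm_eq
      (F' := fun t x ↦ g' ⟪p t, x⟫ * ⟪q t, x⟫ ^ 2 - g ⟪p t, x⟫ * ⟪p t, x⟫)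
      (fun t ↦ by fun_prop) (by fun_prop)
      (fun x t ↦ (((hg _).comp t (hp x t)).mul (hq x t)).congr_deriv
        (by simp only [Function.comp_apply]; ring)) 0
  have hconst : (fun t ↦ ∫ x, g ⟪p t, x⟫ * ⟪q t, x⟫ ∂μ) = fun _ ↦ ∫ x, g ⟪u, x⟫ * ⟪v, x⟫ ∂μ :=
    funext fun t ↦ by
      simpa using hμ.integral_comp_inner_eq (orthonormal_rotation huv t) huv fun y ↦ g (y 0) * y 1
  rw [hconst] at hderiv
  have hzero := hderiv.unique (hasDerivAt_const _ _)
  simp only [p, q, cos_zero, sin_zero, one_smul, zero_smul, add_zero, sub_zero] at hzero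
  rw [integral_sub] at hzero
  · exact sub_eq_zero.1 hzero
  all_goals exact integrable_of_continuous_of_ae_norm_eq hμ.norm_eq (by fun_prop)

theorem integral_deriv_mul_sq_sub_inner_sq [IsFiniteMeasure μ] (hμ : IsUniformOnSphere μ r)
    {u : E} (hu : ‖u‖ = 1) {g g' : ℝ → ℝ} (hg : ∀ a, HasDerivAt g (g' a) a)
    (hg' : Continuous g') :
    ∫ x, g' ⟪u, x⟫ * (r ^ 2 - ⟪u, x⟫ ^ 2) ∂μ
      = (finrank ℝ E - 1) * ∫ x, g ⟪u, x⟫ * ⟪u, x⟫ ∂μ := by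
  classical
  obtain ⟨s, b, i, rfl⟩ := exists_orthonormalBasis_apply_eq_of_norm_eq_one (𝕜 := ℝ) hu
  have hsplit : ∀ᵐ x ∂μ, g' ⟪b i, x⟫ * (r ^ 2 - ⟪b i, x⟫ ^ 2)
      = ∑ k ∈ Finset.univ.erase i, g' ⟪b i, x⟫ * ⟪b k, x⟫ ^ 2 := by
    filter_upwards [hμ.norm_eq] with x hx
    rw [← Finset.mul_sum, Finset.sum_erase_eq_sub (Finset.mem_univ i), b.sum_sq_inner_right, hx]
  have hpair (k : s) (hk : k ∈ Finset.univ.erase i) :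
      ∫ x, g' ⟪b i, x⟫ * ⟪b k, x⟫ ^ 2 ∂μ = ∫ x, g ⟪b i, x⟫ * ⟪b i, x⟫ ∂μ := by
    refine hμ.integral_deriv_mul_inner_sq ?_ hg hg'
    simp [b.inner_eq_zero (Finset.ne_of_mem_erase hk).symm]
  rw [integral_congr_ae hsplit, integral_finsetSum _ fun k _ ↦
      integrable_of_continuous_of_ae_norm_eq hμ.norm_eq (by fun_prop),
    Finset.sum_congr rfl hpair, Finset.sum_const, Finset.card_erase_of_mem (Finset.mem_univ i),
    Finset.card_univ, ← finrank_eq_card_basis b.toBasis, nsmul_eq_mul,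
    Nat.cast_pred (finrank_pos_iff_exists_ne_zero.2 ⟨b i, b.toBasis.ne_zero i⟩)]

theorem finrank_mul_integral_inner_sq_sub_mul_exp [IsFiniteMeasure μ] (hμ : IsUniformOnSphere μ r)
    {u : E} (hu : ‖u‖ = 1) (t : ℝ) :
    finrank ℝ E * ∫ x, (⟪u, x⟫ ^ 2 - r ^ 2 / finrank ℝ E)
        * exp (t * (⟪u, x⟫ ^ 2 - r ^ 2 / finrank ℝ E)) ∂μ
      = 2 * t * ∫ x, ⟪u, x⟫ ^ 2 * (r ^ 2 - ⟪u, x⟫ ^ 2)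
        * exp (t * (⟪u, x⟫ ^ 2 - r ^ 2 / finrank ℝ E)) ∂μ := by
  have hd : (finrank ℝ E : ℝ) ≠ 0 := by
    exact_mod_cast (finrank_pos_iff_exists_ne_zero.2 ⟨u, norm_ne_zero_iff.1 (by simp [hu])⟩).ne'
  set d : ℝ := ((finrank ℝ E : ℕ) : ℝ)
  have hderiv (a : ℝ) : HasDerivAt (fun a ↦ a * exp (t * (a ^ 2 - r ^ 2 / d)))
      ((1 + 2 * t * a ^ 2) * exp (t * (a ^ 2 - r ^ 2 / d))) a :=
    ((hasDerivAt_id a).mul ((((hasDerivAt_id a).pow 2).sub_const _).const_mul t).exp).congr_deriv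
      (by simp only [id_eq, Pi.pow_apply]; ring)
  have hstein := hμ.integral_deriv_mul_sq_sub_inner_sq hu hderiv (by fun_prop)
  have hint {f : E → ℝ} (hf : Continuous f) : Integrable f μ :=
    integrable_of_continuous_of_ae_norm_eq hμ.norm_eq hf
  -- With all terms on one side, the claim and the Stein identity have the same integrand.
  rw [← sub_eq_zero, ← sub_eq_zero.2 hstein.symm, ← integral_const_mul, ← integral_const_mul,
    ← integral_const_mul, ← integral_sub (hint (by fun_prop)) (hint (by fun_prop)),
    ← integral_sub (hint (by fun_prop)) (hint (by fun_prop))]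
  refine integral_congr_ae (ae_of_all _ fun x ↦ ?_)
  field_simp
  ring

theorem hasSubgaussianMGF_inner_sq_sub_of_norm_eq_one [IsProbabilityMeasure μ]
    (hμ : IsUniformOnSphere μ r) {u : E} (hu : ‖u‖ = 1) :
    HasSubgaussianMGF (fun x ↦ ⟪u, x⟫ ^ 2 - r ^ 2 / finrank ℝ E)
      (r ^ 4 / (2 * finrank ℝ E)).toNNReal μ := by
  have hd : (0 : ℝ) < finrank ℝ E := by
    exact_mod_cast finrank_pos_iff_exists_ne_zero.2 ⟨u, norm_ne_zero_iff.1 (by simp [hu])⟩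
  have hint {f : E → ℝ} (hf : Continuous f) : Integrable f μ :=
    integrable_of_continuous_of_ae_norm_eq hμ.norm_eq hf
  refine hasSubgaussianMGF_of_mul_integral_mul_exp_le (fun t ↦ hint (by fun_prop)) fun t ↦ ?_
  have hidentity := hμ.finrank_mul_integral_inner_sq_sub_mul_exp hu t
  rw [coe_toNNReal _ (by positivity)]
  set d : ℝ := ((finrank ℝ E : ℕ) : ℝ)
  set X : E → ℝ := fun x ↦ ⟪u, x⟫ ^ 2 - r ^ 2 / d
  have hamgm : ∫ x, ⟪u, x⟫ ^ 2 * (r ^ 2 - ⟪u, x⟫ ^ 2) * exp (t * X x) ∂μ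
      ≤ r ^ 4 / 4 * mgf X μ t := by
    rw [mgf, ← integral_const_mul]
    refine integral_mono (hint (by fun_prop)) (hint (by fun_prop)) fun x ↦ ?_
    refine mul_le_mul_of_nonneg_right ?_ (exp_pos _).le
    linarith [sq_nonneg (⟪u, x⟫ ^ 2 - r ^ 2 / 2)]
  calc t * ∫ x, X x * exp (t * X x) ∂μ
      = t / d * (d * ∫ x, X x * exp (t * X x) ∂μ) := by field_simp
    _ = 2 * t ^ 2 / d * ∫ x, ⟪u, x⟫ ^ 2 * (r ^ 2 - ⟪u, x⟫ ^ 2) * exp (t * X x) ∂μ := by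
        rw [hidentity]; ring
    _ ≤ 2 * t ^ 2 / d * (r ^ 4 / 4 * mgf X μ t) := by gcongr
    _ = r ^ 4 / (2 * d) * t ^ 2 * mgf X μ t := by ring

theorem hasSubgaussianMGF_inner_sq_sub [IsProbabilityMeasure μ] (hμ : IsUniformOnSphere μ r)
    (w : E) :
    HasSubgaussianMGF (fun x ↦ ⟪w, x⟫ ^ 2 - ‖w‖ ^ 2 * (r ^ 2 / finrank ℝ E))
      (‖w‖₊ ^ 4 * (r ^ 4 / (2 * finrank ℝ E)).toNNReal) μ := by
  rcases eq_or_ne w 0 with rfl | hw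
  · simp
  have hnorm : ‖w‖ ≠ 0 := norm_ne_zero_iff.2 hw
  have hunit : ‖(‖w‖⁻¹ • w)‖ = 1 := by
    rw [norm_smul, norm_inv, norm_norm, inv_mul_cancel₀ hnorm]
  convert hasSubgaussianMGF_const_mul (hμ.hasSubgaussianMGF_inner_sq_sub_of_norm_eq_one hunit)
    (‖w‖ ^ 2) using 2
  · rw [real_inner_smul_left]
    field_simp
  · rw [nnnorm_pow, nnnorm_norm, ← pow_mul]

theorem hasSubgaussianMGF_inner_mul_inner_sub [IsProbabilityMeasure μ]
    (hμ : IsUniformOnSphere μ r) {u v : E} (hu : ‖u‖ = 1) (hv : ‖v‖ = 1) :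
    HasSubgaussianMGF (fun x ↦ ⟪u, x⟫ * ⟪v, x⟫ - ⟪u, v⟫ * (r ^ 2 / finrank ℝ E))
      (r ^ 4 / (2 * finrank ℝ E)).toNNReal μ := by
  set c : ℝ≥0 := (r ^ 4 / (2 * finrank ℝ E)).toNNReal
  have hparallelogram : ‖u + v‖₊ ^ 2 + ‖u - v‖₊ ^ 2 = 4 := by
    have hnorm := parallelogram_law_with_norm ℝ u v
    rw [hu, hv] at hnorm
    refine NNReal.eq ?_
    rw [NNReal.coe_add, NNReal.coe_pow, NNReal.coe_pow, coe_nnnorm, coe_nnnorm, NNReal.coe_ofNat]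
    linarith
  have hquarter : ‖(1 / 4 : ℝ)‖₊ ^ 2 * 4 ^ 2 = 1 := NNReal.eq (by norm_num)
  convert hasSubgaussianMGF_const_mul ((hμ.hasSubgaussianMGF_inner_sq_sub (u + v)).add
    (hμ.hasSubgaussianMGF_inner_sq_sub (u - v)).neg) (1 / 4) using 2 with x
  · rw [Pi.neg_apply, inner_add_left, inner_sub_left, norm_add_sq_real, norm_sub_sq_real]
    ring
  -- The two squares are dependent, so the square roots of their proxies add up; since these are
  -- quadratic in the norms, the parallelogram law shows that polarization costs nothing.
  · have hsqrt (w : E) : NNReal.sqrt (‖w‖₊ ^ 4 * c) = ‖w‖₊ ^ 2 * NNReal.sqrt c := by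
      rw [NNReal.sqrt_mul, show ‖w‖₊ ^ 4 = (‖w‖₊ ^ 2) ^ 2 by ring, NNReal.sqrt_sq]
    rw [hsqrt, hsqrt, ← add_mul, hparallelogram, mul_pow, NNReal.sq_sqrt,
      ← mul_assoc, hquarter, one_mul]

end IsUniformOnSphere

end UniformOnSphere

section FrameOperator

variable {E ι κ : Type*} [NormedAddCommGroup E] [InnerProductSpace ℝ E] [Fintype ι] [Fintype κ]

/-- The frame operator `S v = ∑ i, ⟪x i, v⟫ • x i` of a finite family `x`. -/
def frameOperator (x : ι → E) : E →L[ℝ] E := ∑ i, rankOne ℝ (x i) (x i)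

/-- The Frobenius (Hilbert–Schmidt) norm `√(tr (T† T))` of an operator, in a form that does not
refer to a basis. -/
def frobeniusNorm [FiniteDimensional ℝ E] (T : E →L[ℝ] E) : ℝ :=
  √(LinearMap.trace ℝ E (T.adjoint ∘L T : E →L[ℝ] E))

theorem inner_frameOperator_apply (x : ι → E) (v w : E) :
    ⟪v, frameOperator x w⟫ = ∑ i, ⟪v, x i⟫ * ⟪w, x i⟫ := by
  simp [frameOperator, inner_sum, real_inner_smul_right, mul_comm, real_inner_comm]

theorem frobeniusNorm_eq_sqrt_sum_inner_sq [FiniteDimensional ℝ E] (b : OrthonormalBasis κ ℝ E)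
    (T : E →L[ℝ] E) : frobeniusNorm T = √(∑ p : κ × κ, ⟪b p.1, T (b p.2)⟫ ^ 2) := by
  rw [frobeniusNorm, LinearMap.trace_eq_sum_inner _ b, Fintype.sum_prod_type_right]
  congr! 2 with k
  simp [ContinuousLinearMap.adjoint_inner_right, b.sum_sq_inner_right]

theorem frobNormFrameOpSubId_eq_frobeniusNorm {d n : ℕ} (x : Fin n → EuclideanSpace ℝ (Fin d)) :
    frobNormFrameOpSubId x = frobeniusNorm (frameOperator x - .id ℝ _) := by
  rw [frobNormFrameOpSubId, frobeniusNorm_eq_sqrt_sum_inner_sq (EuclideanSpace.basisFun _ ℝ),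
    Fintype.sum_prod_type]
  simp only [sub_apply, ContinuousLinearMap.id_apply, inner_sub_right, inner_frameOperator_apply]
  simp [EuclideanSpace.inner_single_left, PiLp.single_apply]

end FrameOperator

section Concentration

variable {E ι : Type*} [NormedAddCommGroup E] [InnerProductSpace ℝ E] [FiniteDimensional ℝ E]
  [Nontrivial E] [MeasurableSpace E] [BorelSpace E] [Fintype ι] {μ : Measure E}
  [IsProbabilityMeasure μ] {r : ℝ}

theorem measureReal_frobeniusNorm_frameOperator_sub_ge_le
    (hμ : IsUniformOnSphere μ r) {ε : ℝ} (hε : 0 ≤ ε) :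
    (Measure.pi fun _ : ι ↦ μ).real {x | ε ≤ frobeniusNorm
        (frameOperator x - (Fintype.card ι * (r ^ 2 / finrank ℝ E)) • .id ℝ E)}
      ≤ 2 * finrank ℝ E ^ 2 * exp (-ε ^ 2 / (Fintype.card ι * r ^ 4 * finrank ℝ E)) := by
  let b := stdOrthonormalBasis ℝ E
  have hentry (p : Fin (finrank ℝ E) × Fin (finrank ℝ E)) (x : ι → E) :
      ⟪b p.1, (frameOperator x - (Fintype.card ι * (r ^ 2 / finrank ℝ E)) • .id ℝ E) (b p.2)⟫
        = ∑ i, (⟪b p.1, x i⟫ * ⟪b p.2, x i⟫ - ⟪b p.1, b p.2⟫ * (r ^ 2 / finrank ℝ E)) := by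
    simp only [sub_apply, smul_apply, inner_sub_right, inner_smul_right,
      inner_frameOperator_apply, ContinuousLinearMap.id_apply, Finset.sum_sub_distrib,
      Finset.sum_const, Finset.card_univ, nsmul_eq_mul]
    ring
  have hsubgaussian (p : Fin (finrank ℝ E) × Fin (finrank ℝ E)) :=
    hasSubgaussianMGF_sum_pi (ι := ι)
      (hμ.hasSubgaussianMGF_inner_mul_inner_sub (b.norm_eq_one p.1) (b.norm_eq_one p.2))
  have hd : (0 : ℝ) < finrank ℝ E := by exact_mod_cast finrank_pos
  have : Nonempty (Fin (finrank ℝ E)) := Fin.pos_iff_nonempty.1 finrank_pos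
  simp only [frobeniusNorm_eq_sqrt_sum_inner_sq b, hentry]
  refine (measureReal_sqrt_sum_sq_ge_le hsubgaussian hε).trans_eq ?_
  rw [NNReal.coe_mul, NNReal.coe_natCast, coe_toNNReal _ (by positivity), Fintype.card_prod,
    Fintype.card_fin, Nat.cast_mul, ← sq]
  congr 3
  field_simp

theorem sphere_concentration_frobeniusNorm_general [Nonempty ι]
    (hμ : IsUniformOnSphere μ √(finrank ℝ E / Fintype.card ι)) {ε : ℝ} (hε : 0 ≤ ε) :
    (Measure.pi fun _ : ι ↦ μ) {x | ε ≤ frobeniusNorm (frameOperator x - .id ℝ E)}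
      ≤ ENNReal.ofReal
        (2 * finrank ℝ E ^ 2 * exp (-(Fintype.card ι * ε ^ 2) / finrank ℝ E ^ 3)) := by
  have hd : (0 : ℝ) < finrank ℝ E := by exact_mod_cast finrank_pos
  have hr : √(finrank ℝ E / Fintype.card ι) ^ 2 = (finrank ℝ E / Fintype.card ι : ℝ) :=
    sq_sqrt (by positivity)
  have hscale : (Fintype.card ι * (√(finrank ℝ E / Fintype.card ι) ^ 2 / finrank ℝ E) : ℝ) = 1 := by
    rw [hr]
    field_simp
  have htail := measureReal_frobeniusNorm_frameOperator_sub_ge_le (ι := ι) hμ hε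
  rw [hscale, one_smul, pow_mul _ 2 2, hr] at htail
  rw [← ofReal_measureReal]
  refine ENNReal.ofReal_le_ofReal (htail.trans_eq ?_)
  congr 2
  field_simp

end Concentration

/-- **Concentration over the sphere, Frobenius norm.**
If `x₁, …, xₙ` are i.i.d. uniform on the sphere of radius `√(d/n)` in `ℝ^d` (their joint law
being the `n`-fold product of the uniform probability measure `μ` on that sphere, where `μ`
is characterized as a rotation-invariant probability measure supported on the sphere), then
for every `ε ≥ 0`,
`ℙ(‖S - I‖_F ≥ ε) ≤ 2d² · exp(-(d-1)nε² / (8d⁴))`. -/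
theorem sphere_concentration_frobeniusNorm
    (d n : ℕ) (hd : 2 ≤ d) (hn : 0 < n)
    (μ : Measure (EuclideanSpace ℝ (Fin d))) [IsProbabilityMeasure μ]
    (hsupp : μ (Metric.sphere (0 : EuclideanSpace ℝ (Fin d)) (Real.sqrt (d / n))) = 1)
    (hinv : ∀ Q : EuclideanSpace ℝ (Fin d) ≃ₗᵢ[ℝ] EuclideanSpace ℝ (Fin d),
      Measure.map (⇑Q) μ = μ)
    (ε : ℝ) (hε : 0 ≤ ε) :
    (Measure.pi fun _ : Fin n => μ)
        {x | ε ≤ frobNormFrameOpSubId x}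
      ≤ ENNReal.ofReal
          (2 * d ^ 2 * Real.exp (-((d - 1) * n * ε ^ 2) / (8 * d ^ 4))) := by
  have : NeZero n := ⟨hn.ne'⟩
  have : NeZero d := ⟨by omega⟩
  have hμ : IsUniformOnSphere μ √(finrank ℝ (EuclideanSpace ℝ (Fin d)) / Fintype.card (Fin n)) :=
    isUniformOnSphere_of_measure_sphere_eq_one (by simpa using hsupp) hinv
  have hexponent : -(n * ε ^ 2) / d ^ 3 ≤ -((d - 1) * n * ε ^ 2) / (8 * d ^ 4) := by
    rw [div_le_div_iff₀ (by positivity) (by positivity)]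
    have hdiff : 0 ≤ (7 * d + 1) * (n * ε ^ 2 * d ^ 3 : ℝ) := by positivity
    linarith
  simp only [frobNormFrameOpSubId_eq_frobeniusNorm]
  refine (sphere_concentration_frobeniusNorm_general hμ hε).trans (ENNReal.ofReal_le_ofReal ?_)
  rw [finrank_euclideanSpace_fin, Fintype.card_fin]
  gcongr
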